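/- (Theorem: objective error of DUCA) Suppose the problem setup holds, each X_i is additionally compact, and the sequences (x^k)_{k≥1}, (y^k)_{k≥0}, (z^k)_{k≥0} are generated by DUCA. Then for every k ≥ 1, −R_1/k ≤ f(x̄^k) − f(x*) ≤ R_2/k, where R_1 := ‖y°‖·√(N·λ_1(P_A))·(‖y^0 − y*‖_A + ‖s^0 − s*‖_G) and R_2 := (1/(2ρ))·(v^0 − v*)ᵀH̃†(v^0 − v*) + ½‖y^0‖²_A. -/

import Mathlib

open Matrix
open scoped Kronecker

abbrev Blk (m p : ℕ) := Sum (Fin m) (Fin p)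
abbrev Idx (N m p : ℕ) := Fin N × Blk m p

def projK {N m p : ℕ} (y : Idx N m p → ℝ) : Idx N m p → ℝ :=
  fun ij =>
    match ij with
    | (i, Sum.inl j) => max (y (i, Sum.inl j)) 0
    | (i, Sum.inr j) => y (i, Sum.inr j)

def projKpolar {N m p : ℕ} (y : Idx N m p → ℝ) : Idx N m p → ℝ :=
  fun ij =>
    match ij with
    | (i, Sum.inl j) => min (y (i, Sum.inl j)) 0
    | (_, Sum.inr _) => 0

def memK {N m p : ℕ} (y : Idx N m p → ℝ) : Prop :=
  ∀ (i : Fin N) (j : Fin m), 0 ≤ y (i, Sum.inl j)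

def IsMPInv {n : Type*} [Fintype n] [DecidableEq n] (M Md : Matrix n n ℝ) : Prop :=
  M * Md * M = M ∧ Md * M * Md = Md ∧ (M * Md)ᵀ = M * Md ∧ (Md * M)ᵀ = Md * M

def quadForm {n : Type*} [Fintype n] (M : Matrix n n ℝ) (w : n → ℝ) : ℝ :=
  w ⬝ᵥ (M *ᵥ w)

lemma aux_scalar (u b c : ℝ) (h : c ≤ u + b) :
    (max c 0) ^ 2 ≤ (max u 0) ^ 2 + 2 * max u 0 * b + b ^ 2 := by
  rcases le_total c 0 with h1 | h1 <;> rcases le_total u 0 with h2 | h2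
  · rw [max_eq_right h1, max_eq_right h2]; nlinarith [sq_nonneg b]
  · rw [max_eq_right h1, max_eq_left h2]; nlinarith [sq_nonneg (u + b)]
  · rw [max_eq_left h1, max_eq_right h2]; nlinarith
  · rw [max_eq_left h1, max_eq_left h2]; nlinarith

lemma aux_projK {N m p : ℕ} (u b c : Idx N m p → ℝ)
    (h1 : ∀ i j, c (i, Sum.inl j) ≤ u (i, Sum.inl j) + b (i, Sum.inl j))
    (h2 : ∀ i j, c (i, Sum.inr j) = u (i, Sum.inr j) + b (i, Sum.inr j)) (ij : Idx N m p) :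
    (projK c ij) ^ 2 ≤ (projK u ij) ^ 2 + 2 * projK u ij * b ij + (b ij) ^ 2 := by
  rcases ij with ⟨i, j | j⟩
  · exact aux_scalar _ _ _ (h1 i j)
  · simp only [projK]
    rw [h2]; apply le_of_eq; ring

lemma aux_limit (α C : ℝ) (h : ∀ t : ℝ, 0 < t → t ≤ 1 → 0 ≤ t * α + t ^ 2 * C) : 0 ≤ α := by
  by_contra hα
  push Not at hα
  have hc : 0 < |C| + 1 - α := by have := abs_nonneg C; linarith
  have h1 := h (-α / (|C| + 1 - α)) (by apply div_pos <;> linarith)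
    (by rw [div_le_one hc]; have := abs_nonneg C; linarith)
  set t := -α / (|C| + 1 - α) with ht
  have htp : 0 < t := by apply div_pos <;> linarith
  have h2 : 0 ≤ t * (α + t * C) := by nlinarith
  have h3 : 0 ≤ α + t * C := nonneg_of_mul_nonneg_right h2 htp
  have h4 : t * (|C| + 1 - α) = -α := by rw [ht]; field_simp
  have h5 : t * C ≤ t * |C| := mul_le_mul_of_nonneg_left (le_abs_self C) htp.le
  nlinarith

lemma aux_first_order {N m p : ℕ} {E : Type*} [AddCommGroup E] [Module ℝ E]
    (X : Set E) (hX : Convex ℝ X) (F : E → ℝ) (hF : ConvexOn ℝ Set.univ F)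
    (tg : E → Idx N m p → ℝ)
    (h1 : ∀ i j, ConvexOn ℝ Set.univ (fun x => tg x (i, Sum.inl j)))
    (h2 : ∀ i j (x w : E) (s t : ℝ), s + t = 1 → tg (s • x + t • w) (i, Sum.inr j)
      = s * tg x (i, Sum.inr j) + t * tg w (i, Sum.inr j))
    (e : Idx N m p → ℝ) (he : ∀ i, 0 ≤ e i) (a : Idx N m p → ℝ) (x : E) (hx : x ∈ X)
    (hmin : ∀ w ∈ X, F x + (1 / 2) * ∑ i, e i * (projK (a + tg x) i) ^ 2
      ≤ F w + (1 / 2) * ∑ i, e i * (projK (a + tg w) i) ^ 2) (w : E) (hw : w ∈ X) :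
    F x + ∑ i, (e i * projK (a + tg x) i) * tg x i
      ≤ F w + ∑ i, (e i * projK (a + tg x) i) * tg w i := by
  have key := aux_limit (F w - F x + ∑ i, (e i * projK (a + tg x) i) * (tg w i - tg x i))
    ((1 / 2) * ∑ i, e i * (tg w i - tg x i) ^ 2) (by
      intro t ht0 ht1
      have hm := hmin ((1 - t) • x + t • w) (hX hx hw (by linarith) ht0.le (by ring))
      have hc := hF.2 (Set.mem_univ x) (Set.mem_univ w) (by linarith : 0 ≤ 1 - t) ht0.le (by ring)
      simp only [smul_eq_mul] at hc
      have hs : ∑ i, e i * (projK (a + tg ((1 - t) • x + t • w)) i) ^ 2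
          ≤ ∑ i, e i * ((projK (a + tg x) i) ^ 2
            + 2 * projK (a + tg x) i * (t * (tg w i - tg x i)) + (t * (tg w i - tg x i)) ^ 2) := by
        apply Finset.sum_le_sum
        intro i _
        apply mul_le_mul_of_nonneg_left _ (he i)
        apply aux_projK _ (fun i => t * (tg w i - tg x i))
        · intro i j
          have := (h1 i j).2 (Set.mem_univ x) (Set.mem_univ w)
            (by linarith : 0 ≤ 1 - t) ht0.le (by ring)
          simp only [smul_eq_mul] at this
          simp only [Pi.add_apply]
          linarith
        · intro i j
          have := h2 i j x w (1 - t) t (by ring)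
          simp only [Pi.add_apply]
          linarith
      have hs2 : ∑ i, e i * ((projK (a + tg x) i) ^ 2
            + 2 * projK (a + tg x) i * (t * (tg w i - tg x i)) + (t * (tg w i - tg x i)) ^ 2)
          = ∑ i, e i * (projK (a + tg x) i) ^ 2
            + 2 * t * ∑ i, (e i * projK (a + tg x) i) * (tg w i - tg x i)
            + t ^ 2 * ∑ i, e i * (tg w i - tg x i) ^ 2 := by
        simp only [Finset.mul_sum, ← Finset.sum_add_distrib]
        apply Finset.sum_congr rfl
        intro i _
        ring
      rw [hs2] at hs
      nlinarith)
  have : ∑ i, (e i * projK (a + tg x) i) * (tg w i - tg x i)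
    = ∑ i, (e i * projK (a + tg x) i) * tg w i - ∑ i, (e i * projK (a + tg x) i) * tg x i := by
    simp only [mul_sub, Finset.sum_sub_distrib]
  linarith

section core
variable {ι : Type*} [Fintype ι]

lemma dot_symm {M : Matrix ι ι ℝ} (h : Mᵀ = M) (u v : ι → ℝ) :
    u ⬝ᵥ (M *ᵥ v) = v ⬝ᵥ (M *ᵥ u) := by
  rw [dotProduct_mulVec, ← mulVec_transpose, h, dotProduct_comm]

lemma psd_symm {ι : Type*} {M : Matrix ι ι ℝ} (h : M.PosSemidef) : Mᵀ = M := by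
  have := h.1.eq
  rwa [conjTranspose_eq_transpose_of_trivial] at this

lemma psd_quad {M : Matrix ι ι ℝ} (h : M.PosSemidef) (v : ι → ℝ) : 0 ≤ quadForm M v := by
  have := h.dotProduct_mulVec_nonneg v
  simpa [quadForm] using this

lemma quad_sub {M : Matrix ι ι ℝ} (h : Mᵀ = M) (u v : ι → ℝ) :
    quadForm M (u - v) = quadForm M u - 2 * (u ⬝ᵥ (M *ᵥ v)) + quadForm M v := by
  simp only [quadForm, mulVec_sub, dotProduct_sub, sub_dotProduct, dot_symm h v u]
  ring

lemma psd_cs {M : Matrix ι ι ℝ} (h : M.PosSemidef) (u v : ι → ℝ) :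
    u ⬝ᵥ (M *ᵥ v) ≤ Real.sqrt (quadForm M u) * Real.sqrt (quadForm M v) := by
  have hs := psd_symm h
  rw [← Real.sqrt_mul (psd_quad h u)]
  apply Real.le_sqrt_of_sq_le
  have hq : ∀ t : ℝ, 0 ≤ quadForm M v * (t * t) + (2 * (u ⬝ᵥ (M *ᵥ v))) * t + quadForm M u := by
    intro t
    have := psd_quad h (u + t • v)
    simp only [quadForm, mulVec_add, mulVec_smul, dotProduct_add, add_dotProduct, dotProduct_smul,
      smul_dotProduct, dot_symm hs v u, smul_eq_mul] at this ⊢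
    linarith
  have := discrim_le_zero hq
  simp only [discrim] at this
  nlinarith

lemma psd_tri {M : Matrix ι ι ℝ} (h : M.PosSemidef) (u v : ι → ℝ) :
    Real.sqrt (quadForm M (u - v)) ≤ Real.sqrt (quadForm M u) + Real.sqrt (quadForm M v) := by
  have hs := psd_symm h
  apply Real.sqrt_le_iff.2
  refine ⟨by positivity, ?_⟩
  rw [quad_sub hs]
  have h1 := psd_cs h (-u) v
  have e1 : quadForm M (-u) = quadForm M u := by simp [quadForm, mulVec_neg]
  rw [e1, neg_dotProduct] at h1
  have h2 := Real.sq_sqrt (psd_quad h u)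
  have h3 := Real.sq_sqrt (psd_quad h v)
  nlinarith

/-- three-point identity for the dual step -/
lemma z_step (S : Matrix ι ι ℝ) (hS : Sᵀ = S) (ρ : ℝ) (hρ : 0 < ρ) (y1 z z1 z' : ι → ℝ)
    (hz : z1 = z + ρ • (S *ᵥ y1)) :
    y1 ⬝ᵥ (S *ᵥ z - S *ᵥ z') = (1 / (2 * ρ)) * ((z1 - z') ⬝ᵥ (z1 - z') - (z - z') ⬝ᵥ (z - z'))
      - ρ / 2 * quadForm (S * S) y1 := by
  have e1 : y1 ⬝ᵥ (S *ᵥ z - S *ᵥ z') = (S *ᵥ y1) ⬝ᵥ (z - z') := by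
    rw [← mulVec_sub, dot_symm hS, dotProduct_comm]
  have e2 : quadForm (S * S) y1 = (S *ᵥ y1) ⬝ᵥ (S *ᵥ y1) := by
    rw [quadForm, ← mulVec_mulVec, dot_symm hS]
  rw [e1, e2, hz]
  have e3 : z + ρ • (S *ᵥ y1) - z' = (z - z') + ρ • (S *ᵥ y1) := by abel
  rw [e3]
  generalize S *ᵥ y1 = s
  generalize z - z' = r
  simp only [dotProduct_add, add_dotProduct, dotProduct_smul, smul_dotProduct, smul_eq_mul,
    dotProduct_comm r s]
  field_simp
  ring

/-- one-step upper estimate -/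
lemma step_upper (A H S : Matrix ι ι ℝ) (hA : A.PosSemidef) (hS : Sᵀ = S)
    (hH : H.PosSemidef)
    (hHS : (H - S * S).PosSemidef) (ρ : ℝ) (hρ : 0 < ρ) (y0 y1 z z1 z' τ σ τs : ι → ℝ)
    (hz : z1 = z + ρ • (S *ᵥ y1)) (Fx Fs : ℝ)
    (hτ : τ = A *ᵥ y1 + ρ • (H *ᵥ y1) - σ - A *ᵥ y0 + S *ᵥ z) (hσ : y1 ⬝ᵥ σ = 0)
    (hfo : Fx + y1 ⬝ᵥ τ ≤ Fs + y1 ⬝ᵥ τs) (hτs : y1 ⬝ᵥ τs ≤ y1 ⬝ᵥ (S *ᵥ z')) :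
    Fx - Fs ≤ (1 / 2) * (quadForm A y0 - quadForm A y1)
      + (1 / (2 * ρ)) * ((z - z') ⬝ᵥ (z - z') - (z1 - z') ⬝ᵥ (z1 - z')) := by
  have h1 := z_step S hS ρ hρ y1 z z1 z' hz
  have h2 := psd_quad hA (y1 - y0)
  rw [quad_sub (psd_symm hA)] at h2
  have h3 := psd_quad hHS y1
  have h4 := psd_quad hH y1
  have h5 : y1 ⬝ᵥ τ = quadForm A y1 + ρ * quadForm H y1 - y1 ⬝ᵥ (A *ᵥ y0) + y1 ⬝ᵥ (S *ᵥ z) := by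
    rw [hτ]; simp only [dotProduct_add, dotProduct_sub, dotProduct_smul, hσ, quadForm, smul_eq_mul]; ring
  have h6 : quadForm (H - S * S) y1 = quadForm H y1 - quadForm (S * S) y1 := by
    simp [quadForm, sub_mulVec, dotProduct_sub]
  rw [dotProduct_sub] at h1
  rw [h6] at h3
  have h7 : 0 ≤ ρ * (quadForm H y1 - quadForm (S * S) y1) := by positivity
  have h8 : 0 ≤ ρ * quadForm H y1 := by positivity
  linarith

/-- one-step Fejer monotonicity -/
lemma step_fejer (A H S : Matrix ι ι ℝ) (hA : A.PosSemidef) (hS : Sᵀ = S)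
    (hH : H.PosSemidef)
    (hHS : (H - S * S).PosSemidef) (ρ : ℝ) (hρ : 0 < ρ) (y0 y1 ys z z1 z' τ σ τs : ι → ℝ)
    (hz : z1 = z + ρ • (S *ᵥ y1)) (Fx Fs : ℝ)
    (hτ : τ = A *ᵥ y1 + ρ • (H *ᵥ y1) - σ - A *ᵥ y0 + S *ᵥ z) (hσ : y1 ⬝ᵥ σ = 0)
    (hfo : Fx + y1 ⬝ᵥ τ ≤ Fs + y1 ⬝ᵥ τs) (hτs : y1 ⬝ᵥ τs ≤ y1 ⬝ᵥ (S *ᵥ z'))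
    (hys1 : S *ᵥ ys = 0) (hys2 : H *ᵥ ys = 0) (hysσ : 0 ≤ ys ⬝ᵥ σ)
    (hsad : Fs ≤ Fx + ys ⬝ᵥ τ) :
    quadForm A (y1 - ys) + ((z1 - z') ⬝ᵥ (z1 - z')) / ρ
      ≤ quadForm A (y0 - ys) + ((z - z') ⬝ᵥ (z - z')) / ρ := by
  have h1 := z_step S hS ρ hρ y1 z z1 z' hz
  have h2 := psd_quad hA (y1 - y0)
  have hAs := psd_symm hA
  rw [quad_sub hAs] at h2 ⊢
  rw [quad_sub hAs y0]
  have h3 := psd_quad hHS y1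
  have h4 := psd_quad hH y1
  have h5 : y1 ⬝ᵥ τ = quadForm A y1 + ρ * quadForm H y1 - y1 ⬝ᵥ (A *ᵥ y0) + y1 ⬝ᵥ (S *ᵥ z) := by
    rw [hτ]; simp only [dotProduct_add, dotProduct_sub, dotProduct_smul, hσ, quadForm, smul_eq_mul]; ring
  have h9 : ys ⬝ᵥ τ = y1 ⬝ᵥ (A *ᵥ ys) - y0 ⬝ᵥ (A *ᵥ ys) - ys ⬝ᵥ σ := by
    rw [hτ]; simp only [dotProduct_add, dotProduct_sub, dotProduct_smul, smul_eq_mul,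
      dot_symm hS ys, dot_symm (psd_symm hH) ys, dot_symm hAs ys, hys1, hys2, dotProduct_zero]; ring
  have h6 : quadForm (H - S * S) y1 = quadForm H y1 - quadForm (S * S) y1 := by
    simp [quadForm, sub_mulVec, dotProduct_sub]
  rw [dotProduct_sub] at h1
  rw [h6] at h3
  have h7 : 0 ≤ ρ * (quadForm H y1 - quadForm (S * S) y1) := by positivity
  have h8 : 0 ≤ ρ * quadForm H y1 := by positivity
  have e : ∀ r : ℝ, r / ρ = 2 * ((1 / (2 * ρ)) * r) := by intro r; field_simp
  rw [e, e]
  linarith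

lemma mp_range [DecidableEq ι] (S M Md : Matrix ι ι ℝ) (hS : Sᵀ = S) (hM : S * S = M)
    (h : M * Md * M = M) : M * Md * S = S := by
  have h1 : ((M * Md - 1) * S) * ((M * Md - 1) * S)ᵀ = 0 := by
    rw [transpose_mul, hS, ← mul_assoc, mul_assoc _ S S, hM, sub_mul, h, one_mul, sub_self, zero_mul]
  have h2 : (M * Md - 1) * S = 0 := by
    rw [← conjTranspose_eq_transpose_of_trivial] at h1
    exact self_mul_conjTranspose_eq_zero.1 h1
  rw [sub_mul, one_mul, sub_eq_zero] at h2
  exact h2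

/-- a dual point realising the pseudo-inverse norm -/
lemma mp_point [DecidableEq ι] (S M Md : Matrix ι ι ℝ) (hS : Sᵀ = S) (hM : S * S = M)
    (h : M * Md * M = M) (z zs : ι → ℝ) :
    ∃ z' : ι → ℝ, S *ᵥ z' = S *ᵥ zs ∧
      (z - z') ⬝ᵥ (z - z') = quadForm Md (S *ᵥ z - S *ᵥ zs) := by
  have hr := mp_range S M Md hS hM h
  have e : ∀ u, M *ᵥ (Md *ᵥ (S *ᵥ u)) = S *ᵥ u := by
    intro u; rw [mulVec_mulVec, mulVec_mulVec, hr]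
  refine ⟨z - S *ᵥ (Md *ᵥ (S *ᵥ (z - zs))), ?_, ?_⟩
  · rw [mulVec_sub, mulVec_mulVec _ S S, hM, e, mulVec_sub]; abel
  · rw [sub_sub_cancel, ← mulVec_sub, dot_symm hS, mulVec_mulVec _ S S, hM, e, quadForm,
      dotProduct_comm]

end core

lemma rayleigh {n : ℕ} (P : Matrix (Fin n) (Fin n) ℝ) (hP : P.PosSemidef) (l : ℝ)
    (hmax : ∀ (μ : ℝ) (v : Fin n → ℝ), v ≠ 0 → P *ᵥ v = μ • v → μ ≤ l) (v : Fin n → ℝ) :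
    quadForm P v ≤ l * (v ⬝ᵥ v) := by
  have hh : (l • (1 : Matrix (Fin n) (Fin n) ℝ) - P).IsHermitian := by
    apply IsHermitian.sub _ hP.1
    simp [IsHermitian]
  have hp : (l • (1 : Matrix (Fin n) (Fin n) ℝ) - P).PosSemidef := by
    rw [hh.posSemidef_iff_eigenvalues_nonneg]
    intro i
    have h1 := hh.mulVec_eigenvectorBasis i
    have h0 : (hh.eigenvectorBasis i).ofLp ≠ 0 := by
      intro h
      have := hh.eigenvectorBasis.orthonormal.ne_zero i
      exact this (by ext j; simp [h])
    rw [sub_mulVec, smul_mulVec, one_mulVec] at h1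
    have := hmax (l - hh.eigenvalues i) _ h0 (by rw [sub_smul, ← h1]; abel)
    simp only [Pi.zero_apply]
    linarith
  have := psd_quad hp v
  simp only [quadForm, sub_mulVec, smul_mulVec, one_mulVec, dotProduct_sub, dotProduct_smul,
    smul_eq_mul] at this ⊢
  linarith

lemma kron_mulVec {N m p : ℕ} (P : Matrix (Fin N) (Fin N) ℝ) (u : Idx N m p → ℝ) (i : Fin N)
    (j : Blk m p) : ((P ⊗ₖ (1 : Matrix (Blk m p) (Blk m p) ℝ)) *ᵥ u) (i, j)
      = (P *ᵥ (fun l => u (l, j))) i := by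
  simp only [mulVec, dotProduct, Fintype.sum_prod_type, kroneckerMap_apply, one_apply]
  apply Finset.sum_congr rfl
  intro l _
  simp [Finset.sum_ite_eq]

lemma kron_psd {N m p : ℕ} (P : Matrix (Fin N) (Fin N) ℝ) (h : P.PosSemidef) :
    (P ⊗ₖ (1 : Matrix (Blk m p) (Blk m p) ℝ)).PosSemidef :=
  h.kronecker PosSemidef.one

lemma sum_Icc_shift (h : ℕ → ℝ) (k : ℕ) :
    ∑ l ∈ Finset.Icc 1 k, h l = ∑ l ∈ Finset.range k, h (l + 1) := by
  induction k with
  | zero => simp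
  | succ n ih => rw [Finset.sum_Icc_succ_top (by omega), ih, Finset.sum_range_succ]

lemma sqrt_null {ι : Type*} [Fintype ι] (S : Matrix ι ι ℝ) (hS : Sᵀ = S) (u : ι → ℝ)
    (h : (S * S) *ᵥ u = 0) : S *ᵥ u = 0 := by
  rw [← dotProduct_self_eq_zero, dot_symm hS, mulVec_mulVec, h, dotProduct_zero]

lemma mp_orth {ι : Type*} [Fintype ι] [DecidableEq ι] (S Sd : Matrix ι ι ℝ) (hS : Sᵀ = S)
    (h : IsMPInv S Sd) (u : ι → ℝ) : S *ᵥ (u - S *ᵥ (Sd *ᵥ u)) = 0 := by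
  obtain ⟨h1, -, h3, -⟩ := h
  have h4 : S * (S * Sd) = S := by
    rw [← h3, transpose_mul, hS]
    have := congrArg transpose h1
    rwa [transpose_mul, transpose_mul, hS] at this
  rw [mulVec_sub, mulVec_mulVec, mulVec_mulVec, mul_assoc, h4, sub_self]

/-- the optimal value of the coupled constraint is dominated by its component in the range -/
lemma tgs_le {N m p : ℕ} (hN : 1 ≤ N) (PHt : Matrix (Fin N) (Fin N) ℝ)
    (hnull : ∀ v : Fin N → ℝ, PHt *ᵥ v = 0 ↔ ∃ t : ℝ, v = fun _ => t)
    (S Sd : Matrix (Idx N m p) (Idx N m p) ℝ) (hS : Sᵀ = S)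
    (hSS : S * S = PHt ⊗ₖ (1 : Matrix (Blk m p) (Blk m p) ℝ)) (hSd : IsMPInv S Sd)
    (τ : Idx N m p → ℝ) (h1 : ∀ j, ∑ i, τ (i, Sum.inl j) ≤ 0)
    (h2 : ∀ j, ∑ i, τ (i, Sum.inr j) = 0) (y : Idx N m p → ℝ) (hy : memK y) :
    y ⬝ᵥ τ ≤ y ⬝ᵥ (S *ᵥ (Sd *ᵥ τ)) := by
  have hr := mp_orth S Sd hS hSd τ
  set r := τ - S *ᵥ (Sd *ᵥ τ) with hrdef
  have hN' : (0 : ℝ) < N := by exact_mod_cast hN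
  have hc : ∀ j, ∃ t : ℝ, ∀ i, r (i, j) = t := by
    intro j
    have : PHt *ᵥ (fun l => r (l, j)) = 0 := by
      funext i
      rw [← kron_mulVec, ← hSS, ← mulVec_mulVec, hr, mulVec_zero]; rfl
    obtain ⟨t, ht⟩ := (hnull _).1 this
    exact ⟨t, fun i => congrFun ht i⟩
  choose t ht using hc
  have hsum : ∀ j, (N : ℝ) * t j = ∑ i, τ (i, j) := by
    intro j
    have hS1 : S *ᵥ (fun ij : Idx N m p => if ij.2 = j then 1 else 0) = 0 := by
      apply sqrt_null S hS
      rw [hSS]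
      funext ⟨i, j'⟩
      rw [kron_mulVec]
      exact congrFun ((hnull _).2 ⟨if j' = j then 1 else 0, rfl⟩) i
    have h0 : (fun ij : Idx N m p => if ij.2 = j then (1 : ℝ) else 0) ⬝ᵥ (S *ᵥ (Sd *ᵥ τ)) = 0 := by
      rw [dot_symm hS, hS1, dotProduct_zero]
    have h3 : ∀ w : Idx N m p → ℝ,
        (fun ij : Idx N m p => if ij.2 = j then (1 : ℝ) else 0) ⬝ᵥ w = ∑ i, w (i, j) := by
      intro w
      simp only [dotProduct, Fintype.sum_prod_type]
      apply Finset.sum_congr rfl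
      intro i _
      simp only [ite_mul, one_mul, zero_mul]
      rw [Finset.sum_ite_eq' Finset.univ j]
      simp
    have h4 := h3 r
    rw [hrdef, dotProduct_sub, h0, h3, ← hrdef] at h4
    simp only [ht, Finset.sum_const, Finset.card_univ, Fintype.card_fin, nsmul_eq_mul] at h4
    linarith
  have hle : y ⬝ᵥ r ≤ 0 := by
    simp only [dotProduct]
    apply Finset.sum_nonpos
    rintro ⟨i, j | j⟩ _
    · rw [ht]
      have := hsum (Sum.inl j)
      have h5 := h1 j
      have : t (Sum.inl j) ≤ 0 := by
        by_contra hcon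
        push Not at hcon
        have := mul_pos hN' hcon
        linarith
      exact mul_nonpos_of_nonneg_of_nonpos (hy i j) this
    · rw [ht]
      have := hsum (Sum.inr j)
      rw [h2 j] at this
      have : t (Sum.inr j) = 0 := by
        rcases mul_eq_zero.1 this with h | h
        · exact absurd h hN'.ne'
        · exact h
      rw [this, mul_zero]
  rw [hrdef, dotProduct_sub] at hle
  linarith

lemma avg_convex {N : ℕ} {d : Fin N → ℕ} (G : (∀ i, Fin (d i) → ℝ) → ℝ)
    (hG : ConvexOn ℝ Set.univ G) (x xbar : ℕ → ∀ i, Fin (d i) → ℝ)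
    (hxbar : ∀ k (i : Fin N) (j : Fin (d i)),
      xbar k i j = (∑ l ∈ Finset.Icc 1 k, x l i j) / (k : ℝ)) (k : ℕ) (hk : 1 ≤ k) :
    (k : ℝ) * G (xbar k) ≤ ∑ l ∈ Finset.range k, G (x (l + 1)) := by
  have hk' : (0 : ℝ) < k := by exact_mod_cast hk
  have e : xbar k = ∑ l ∈ Finset.range k, (1 / (k : ℝ)) • x (l + 1) := by
    funext i j
    rw [hxbar, sum_Icc_shift (fun l => x l i j)]
    simp only [Finset.sum_apply, Pi.smul_apply, smul_eq_mul]
    rw [← Finset.mul_sum]; ring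
  have := hG.map_sum_le (t := Finset.range k) (w := fun _ => 1 / (k : ℝ))
    (p := fun l => x (l + 1)) (fun _ _ => by positivity)
    (by simp [hk'.ne']) (fun _ _ => Set.mem_univ _)
  rw [← e] at this
  simp only [smul_eq_mul, ← Finset.mul_sum] at this
  calc (k : ℝ) * G (xbar k) ≤ k * (1 / k * ∑ l ∈ Finset.range k, G (x (l + 1))) :=
        mul_le_mul_of_nonneg_left this hk'.le
    _ = _ := by field_simp

lemma avg_mem {N : ℕ} {d : Fin N → ℕ} (X : ∀ i : Fin N, Set (Fin (d i) → ℝ))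
    (hX : ∀ i, Convex ℝ (X i)) (x xbar : ℕ → ∀ i, Fin (d i) → ℝ)
    (hxX : ∀ k, ∀ i, x (k + 1) i ∈ X i)
    (hxbar : ∀ k (i : Fin N) (j : Fin (d i)),
      xbar k i j = (∑ l ∈ Finset.Icc 1 k, x l i j) / (k : ℝ)) (k : ℕ) (hk : 1 ≤ k) (i : Fin N) :
    xbar k i ∈ X i := by
  have hk' : (0 : ℝ) < k := by exact_mod_cast hk
  have e : xbar k i = ∑ l ∈ Finset.range k, (1 / (k : ℝ)) • x (l + 1) i := by
    funext j
    rw [hxbar, sum_Icc_shift (fun l => x l i j)]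
    simp only [Finset.sum_apply, Pi.smul_apply, smul_eq_mul]
    rw [← Finset.mul_sum]; ring
  rw [e]
  exact (hX i).sum_mem (fun _ _ => by positivity) (by simp [hk'.ne']) (fun l _ => hxX l i)

lemma quad_const {N m p : ℕ} (P : Matrix (Fin N) (Fin N) ℝ) (hP : P.PosSemidef) (l : ℝ)
    (hmax : ∀ (μ : ℝ) (v : Fin N → ℝ), v ≠ 0 → P *ᵥ v = μ • v → μ ≤ l)
    (mus : Fin m → ℝ) (lams : Fin p → ℝ)
    (ys : Idx N m p → ℝ) (hys : ∀ (i : Fin N) (j : Blk m p), ys (i, j) = Sum.elim mus lams j) :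
    quadForm (P ⊗ₖ (1 : Matrix (Blk m p) (Blk m p) ℝ)) ys
      ≤ ((∑ j, (mus j) ^ 2) + ∑ j, (lams j) ^ 2) * ((N : ℝ) * l) := by
  have h1 := rayleigh P hP l hmax (fun _ => 1)
  have h2 : (fun _ : Fin N => (1 : ℝ)) ⬝ᵥ (fun _ => 1) = N := by simp [dotProduct]
  rw [h2] at h1
  have h3 : quadForm (P ⊗ₖ (1 : Matrix (Blk m p) (Blk m p) ℝ)) ys
      = (∑ j, (Sum.elim mus lams j) ^ 2) * quadForm P (fun _ => 1) := by
    simp only [quadForm, dotProduct, Fintype.sum_prod_type, kron_mulVec, hys]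
    simp only [Finset.sum_mul]
    rw [Finset.sum_comm]
    apply Finset.sum_congr rfl
    intro j _
    rw [Finset.mul_sum]
    apply Finset.sum_congr rfl
    intro i _
    simp only [mulVec, dotProduct, one_mul, mul_one, ← Finset.sum_mul]
    ring
  rw [h3, Fintype.sum_sum_type]
  simp only [Sum.elim_inl, Sum.elim_inr]
  apply mul_le_mul_of_nonneg_left _ (by positivity)
  linarith

theorem stmt1
    (N m p : ℕ) (hN : 1 ≤ N) (hm : 1 ≤ m) (hp : 1 ≤ p)
    (d : Fin N → ℕ)
    (X : ∀ i : Fin N, Set (Fin (d i) → ℝ))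
    (hXne : ∀ i, (X i).Nonempty) (hXcl : ∀ i, IsClosed (X i))
    (hXcv : ∀ i, Convex ℝ (X i))
    (f : ∀ i : Fin N, (Fin (d i) → ℝ) → ℝ)
    (hf : ∀ i, ConvexOn ℝ Set.univ (f i))
    (g : ∀ i : Fin N, (Fin (d i) → ℝ) → Fin m → ℝ)
    (hg : ∀ i j, ConvexOn ℝ Set.univ (fun xi => g i xi j))
    (B : ∀ i : Fin N, Matrix (Fin p) (Fin (d i)) ℝ) (c : ∀ i : Fin N, Fin p → ℝ)
    (F : (∀ i, Fin (d i) → ℝ) → ℝ) (hF : ∀ x, F x = ∑ i, f i (x i))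
    (tg : (∀ i, Fin (d i) → ℝ) → Idx N m p → ℝ)
    (htg1 : ∀ x (i : Fin N) (j : Fin m), tg x (i, Sum.inl j) = g i (x i) j)
    (htg2 : ∀ x (i : Fin N) (j : Fin p), tg x (i, Sum.inr j) = (B i *ᵥ x i + c i) j)
    (ρ : ℝ) (hρ : 0 < ρ)
    (PA PH PHt : Matrix (Fin N) (Fin N) ℝ)
    (hPA : PA.PosSemidef) (hPH : PH.PosSemidef) (hPHt : PHt.PosSemidef)
    (hDdiag : (PA + ρ • PH).IsDiag) (hDpd : (PA + ρ • PH).PosDef)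
    (hHHt : (PH - PHt).PosSemidef)
    (hPHnull : ∀ v : Fin N → ℝ, PH *ᵥ v = 0 ↔ ∃ t : ℝ, v = fun _ => t)
    (hPHtnull : ∀ v : Fin N → ℝ, PHt *ᵥ v = 0 ↔ ∃ t : ℝ, v = fun _ => t)
    (A Htld D : Matrix (Idx N m p) (Idx N m p) ℝ)
    (hA : A = PA ⊗ₖ (1 : Matrix (Blk m p) (Blk m p) ℝ))
    (hHtld : Htld = PHt ⊗ₖ (1 : Matrix (Blk m p) (Blk m p) ℝ))
    (hD : D = A + ρ • (PH ⊗ₖ (1 : Matrix (Blk m p) (Blk m p) ℝ)))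
    (Hhalf : Matrix (Idx N m p) (Idx N m p) ℝ)
    (hHhalfpsd : Hhalf.PosSemidef) (hHhalfsq : Hhalf * Hhalf = Htld)
    (hXcp : ∀ i, IsCompact (X i))
    (Htdag : Matrix (Idx N m p) (Idx N m p) ℝ) (hHtdag : IsMPInv Htld Htdag)
    (Hhalfdag : Matrix (Idx N m p) (Idx N m p) ℝ) (hHhalfdag : IsMPInv Hhalf Hhalfdag)
    (lam1 : ℝ)
    (hlam1ev : ∃ v : Fin N → ℝ, v ≠ 0 ∧ PA *ᵥ v = lam1 • v)
    (hlam1max : ∀ (μ : ℝ) (v : Fin N → ℝ), v ≠ 0 → PA *ᵥ v = μ • v → μ ≤ lam1)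
    (x : ℕ → ∀ i, Fin (d i) → ℝ) (y z : ℕ → Idx N m p → ℝ)
    (hxX : ∀ k, ∀ i, x (k + 1) i ∈ X i)
    (hy0 : memK (y 0))
    (hyupd : ∀ k, y (k + 1) = projK (D⁻¹ *ᵥ ((A *ᵥ y k) - (Hhalf *ᵥ z k) + tg (x (k + 1)))))
    (hzupd : ∀ k, z (k + 1) = z k + ρ • (Hhalf *ᵥ y (k + 1)))
    (hxmin : ∀ k, ∀ w, (∀ i, w i ∈ X i) →
      F (x (k + 1))
          + (1 / 2) * quadForm D⁻¹ (projK ((A *ᵥ y k) - (Hhalf *ᵥ z k) + tg (x (k + 1))))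
        ≤ F w + (1 / 2) * quadForm D⁻¹ (projK ((A *ᵥ y k) - (Hhalf *ᵥ z k) + tg w)))
    (xs : ∀ i, Fin (d i) → ℝ) (hxsX : ∀ i, xs i ∈ X i)
    (hxsg : ∀ j, (∑ i, g i (xs i) j) ≤ 0)
    (hxsh : ∀ j, (∑ i, (B i *ᵥ xs i + c i) j) = 0)
    (mus : Fin m → ℝ) (hmus : ∀ j, 0 ≤ mus j) (lams : Fin p → ℝ)
    (hcs : (∑ j, mus j * ∑ i, g i (xs i) j) = 0)
    (hsaddle : ∀ w, (∀ i, w i ∈ X i) →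
      F xs + (∑ j, mus j * ∑ i, g i (xs i) j) + (∑ j, lams j * ∑ i, (B i *ᵥ xs i + c i) j)
        ≤ F w + (∑ j, mus j * ∑ i, g i (w i) j) + (∑ j, lams j * ∑ i, (B i *ᵥ w i + c i) j))
    (ys : Idx N m p → ℝ) (hys : ∀ (i : Fin N) (j : Blk m p), ys (i, j) = Sum.elim mus lams j)
    (zstar vstar : Idx N m p → ℝ)
    (hzstar : zstar = Hhalfdag *ᵥ tg xs)
    (hvstar : vstar = Hhalf *ᵥ zstar)
    (xbar : ℕ → ∀ i, Fin (d i) → ℝ)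
    (hxbar : ∀ k (i : Fin N) (j : Fin (d i)),
      xbar k i j = (∑ l ∈ Finset.Icc 1 k, x l i j) / (k : ℝ))
    :
    ∀ k : ℕ, 1 ≤ k →
      -((Real.sqrt ((∑ j, (mus j) ^ 2) + ∑ j, (lams j) ^ 2) * Real.sqrt ((N : ℝ) * lam1) *
            (Real.sqrt (quadForm A (y 0 - ys))
              + Real.sqrt (quadForm A (y 0 - ys) + ((z 0 - zstar) ⬝ᵥ (z 0 - zstar)) / ρ))) / (k : ℝ))
          ≤ F (xbar k) - F xs
        ∧ F (xbar k) - F xs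
          ≤ ((1 / (2 * ρ)) * quadForm Htdag ((Hhalf *ᵥ z 0) - vstar)
              + (1 / 2) * quadForm A (y 0)) / (k : ℝ) := by
  have hSs : Hhalfᵀ = Hhalf := psd_symm hHhalfpsd
  set H : Matrix (Idx N m p) (Idx N m p) ℝ := PH ⊗ₖ (1 : Matrix (Blk m p) (Blk m p) ℝ) with hHdef
  have hApsd : A.PosSemidef := by rw [hA]; exact kron_psd _ hPA
  have hHpsd : H.PosSemidef := kron_psd _ hPH
  have hHSpsd : (H - Hhalf * Hhalf).PosSemidef := by
    rw [hHhalfsq, hHtld, hHdef]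
    have := kron_psd (m := m) (p := p) _ hHHt
    have e : (PH - PHt) ⊗ₖ (1 : Matrix (Blk m p) (Blk m p) ℝ) = PH ⊗ₖ 1 - PHt ⊗ₖ 1 := by
      ext ⟨i, j⟩ ⟨i', j'⟩
      simp [kroneckerMap_apply, sub_mul]
    rwa [e] at this
  -- D is diagonal
  set δ : Idx N m p → ℝ := fun ij => (PA + ρ • PH) ij.1 ij.1 with hδ
  have hδpos : ∀ ij, 0 < δ ij := fun ij => hDpd.diag_pos
  have hDd : D = diagonal δ := by
    rw [hD, hA, hHdef]
    ext ⟨i, j⟩ ⟨i', j'⟩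
    by_cases hij : i = i'
    · subst hij
      by_cases hj : j = j'
      · subst hj; simp [hδ]
      · simp [hj]
    · have := hDdiag hij
      simp only [Matrix.add_apply, Matrix.smul_apply, smul_eq_mul] at this
      have hne : ((i, j) : Idx N m p) ≠ (i', j') := by
        intro h; exact hij (Prod.ext_iff.1 h).1
      rw [diagonal_apply_ne _ hne]
      simp only [Matrix.add_apply, Matrix.smul_apply, kroneckerMap_apply, smul_eq_mul]
      rw [← mul_assoc, ← add_mul, this, zero_mul]
  have hDinv : D⁻¹ = diagonal (fun i => (δ i)⁻¹) := by
    apply inv_eq_left_inv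
    rw [hDd, diagonal_mul_diagonal, ← diagonal_one]
    congr 1
    funext i
    exact inv_mul_cancel₀ (hδpos i).ne'
  have hquad : ∀ w : Idx N m p → ℝ, quadForm D⁻¹ w = ∑ i, (δ i)⁻¹ * (w i) ^ 2 := by
    intro w
    rw [hDinv]
    simp only [quadForm, dotProduct, mulVec_diagonal]
    apply Finset.sum_congr rfl
    intro i _
    ring
  -- convexity
  have hFc : ConvexOn ℝ Set.univ F := by
    refine ⟨convex_univ, ?_⟩
    intro a _ b _ s t hs ht hst
    rw [hF, hF, hF, smul_eq_mul, smul_eq_mul, Finset.mul_sum, Finset.mul_sum,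
      ← Finset.sum_add_distrib]
    apply Finset.sum_le_sum
    intro i _
    exact (hf i).2 (Set.mem_univ _) (Set.mem_univ _) hs ht hst
  have htc1 : ∀ i j, ConvexOn ℝ Set.univ (fun x => tg x (i, Sum.inl j)) := by
    intro i j
    refine ⟨convex_univ, ?_⟩
    intro a _ b _ s t hs ht hst
    simp only [htg1]
    exact (hg i j).2 (Set.mem_univ _) (Set.mem_univ _) hs ht hst
  have htc2 : ∀ i j (a b : ∀ i, Fin (d i) → ℝ) (s t : ℝ), s + t = 1 →
      tg (s • a + t • b) (i, Sum.inr j)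
        = s * tg a (i, Sum.inr j) + t * tg b (i, Sum.inr j) := by
    intro i j a b s t hst
    simp only [htg2, Pi.add_apply, Pi.smul_apply, mulVec_add, mulVec_smul, smul_eq_mul]
    have : c i j = (s + t) * c i j := by rw [hst, one_mul]
    linear_combination this
  have hLc : ConvexOn ℝ Set.univ (fun w => ys ⬝ᵥ tg w) := by
    refine ⟨convex_univ, ?_⟩
    intro a _ b _ s t hs ht hst
    simp only [dotProduct, smul_eq_mul, Finset.mul_sum, ← Finset.sum_add_distrib]
    apply Finset.sum_le_sum
    rintro ⟨i, j | j⟩ _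
    · have := (htc1 i j).2 (Set.mem_univ a) (Set.mem_univ b) hs ht hst
      simp only [smul_eq_mul] at this
      have h0 : 0 ≤ ys (i, Sum.inl j) := by rw [hys]; exact hmus j
      nlinarith [mul_le_mul_of_nonneg_left this h0]
    · rw [htc2 i j a b s t hst]; apply le_of_eq; ring
  -- the shifted argument, its projection and the residual
  set u : ℕ → Idx N m p → ℝ := fun k => (A *ᵥ y k) - (Hhalf *ᵥ z k) + tg (x (k + 1)) with hu
  have hy' : ∀ k i, y (k + 1) i = (δ i)⁻¹ * projK (u k) i := by
    intro k i
    rw [hyupd, hDinv]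
    rcases i with ⟨i, j | j⟩
    · simp only [projK, mulVec_diagonal]
      rw [mul_max_of_nonneg _ _ (inv_nonneg.2 (hδpos _).le), mul_zero]
    · simp only [projK, mulVec_diagonal]; rfl
  set σ : ℕ → Idx N m p → ℝ := fun k => projK (u k) - u k with hσdef
  have hDy : ∀ k, A *ᵥ y (k + 1) + ρ • (H *ᵥ y (k + 1)) = projK (u k) := by
    intro k
    rw [← smul_mulVec, ← add_mulVec, ← hD, hDd]
    funext i
    rw [mulVec_diagonal, hy', mul_inv_cancel_left₀ (hδpos i).ne']
  have hτ : ∀ k, tg (x (k + 1)) = A *ᵥ y (k + 1) + ρ • (H *ᵥ y (k + 1)) - σ k - A *ᵥ y k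
      + Hhalf *ᵥ z k := by
    intro k
    rw [hDy, hσdef]
    simp only [hu]
    abel
  have hσ0 : ∀ k, y (k + 1) ⬝ᵥ σ k = 0 := by
    intro k
    apply Finset.sum_eq_zero
    rintro ⟨i, j | j⟩ _
    · rw [hy']
      simp only [hσdef, Pi.sub_apply, projK]
      rcases le_total (u k (i, Sum.inl j)) 0 with h | h
      · rw [max_eq_right h]; ring
      · rw [max_eq_left h]; ring
    · simp [hσdef, projK]
  have hyK : ∀ k, memK (y (k + 1)) := by
    intro k i j
    rw [hy']
    exact mul_nonneg (inv_nonneg.2 (hδpos _).le) (le_max_right _ _)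
  have hysσ : ∀ k, 0 ≤ ys ⬝ᵥ σ k := by
    intro k
    apply Finset.sum_nonneg
    rintro ⟨i, j | j⟩ _
    · rw [hys]
      apply mul_nonneg (hmus j)
      simp only [hσdef, Pi.sub_apply, projK]
      linarith [le_max_left (u k (i, Sum.inl j)) 0]
    · simp [hσdef, projK]
  have hHys : H *ᵥ ys = 0 := by
    funext ⟨i, j⟩
    rw [hHdef, kron_mulVec]
    exact congrFun ((hPHnull _).2 ⟨Sum.elim mus lams j, by funext l; exact hys l j⟩) i
  have hSys : Hhalf *ᵥ ys = 0 := by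
    apply sqrt_null _ hSs
    rw [hHhalfsq, hHtld]
    funext ⟨i, j⟩
    rw [kron_mulVec]
    exact congrFun ((hPHtnull _).2 ⟨Sum.elim mus lams j, by funext l; exact hys l j⟩) i
  -- first-order condition
  have hfo : ∀ k w, (∀ i, w i ∈ X i) →
      F (x (k + 1)) + y (k + 1) ⬝ᵥ tg (x (k + 1)) ≤ F w + y (k + 1) ⬝ᵥ tg w := by
    intro k w hw
    have := aux_first_order (Set.univ.pi X) (convex_pi (fun i _ => hXcv i)) F hFc tg htc1 htc2
      (fun i => (δ i)⁻¹) (fun i => inv_nonneg.2 (hδpos i).le) ((A *ᵥ y k) - (Hhalf *ᵥ z k))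
      (x (k + 1)) (fun i _ => hxX k i)
      (fun w hw => by
        have := hxmin k w (fun i => hw i (Set.mem_univ i))
        rwa [hquad, hquad] at this) w (fun i _ => hw i)
    have e : y (k + 1) = fun i => (δ i)⁻¹ * projK (u k) i := funext (hy' k)
    rw [e]
    exact this
  have hτs : ∀ k, y (k + 1) ⬝ᵥ tg xs ≤ y (k + 1) ⬝ᵥ vstar := by
    intro k
    rw [hvstar, hzstar]
    apply tgs_le hN PHt hPHtnull Hhalf Hhalfdag hSs (hHhalfsq.trans hHtld) hHhalfdag _ _ _ _ (hyK k)
    · intro j; simp only [htg1]; exact hxsg j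
    · intro j; simp only [htg2]; exact hxsh j
  have hysdot : ∀ w, ys ⬝ᵥ tg w = (∑ j, mus j * ∑ i, g i (w i) j)
      + (∑ j, lams j * ∑ i, (B i *ᵥ w i + c i) j) := by
    intro w
    simp only [dotProduct, Fintype.sum_prod_type, Fintype.sum_sum_type, hys, Sum.elim_inl,
      Sum.elim_inr, htg1, htg2, Finset.sum_add_distrib, Finset.mul_sum]
    congr 1 <;> rw [Finset.sum_comm]
  have hsad : ∀ w, (∀ i, w i ∈ X i) → F xs ≤ F w + ys ⬝ᵥ tg w := by
    intro w hw
    have := hsaddle w hw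
    rw [hcs] at this
    simp only [hxsh, mul_zero, Finset.sum_const_zero, add_zero] at this
    rw [hysdot]
    linarith
  intro k hk
  have hk' : (0 : ℝ) < k := by exact_mod_cast hk
  constructor
  · -- lower bound
    have hfej : ∀ k, quadForm A (y k - ys) + ((z k - zstar) ⬝ᵥ (z k - zstar)) / ρ
        ≤ quadForm A (y 0 - ys) + ((z 0 - zstar) ⬝ᵥ (z 0 - zstar)) / ρ := by
      intro k
      induction k with
      | zero => exact le_rfl
      | succ n ih =>
        refine le_trans ?_ ih
        exact step_fejer A H Hhalf hApsd hSs hHpsd hHSpsd ρ hρ (y n) (y (n + 1)) ys (z n) (z (n + 1))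
          zstar _ (σ n) (tg xs) (hzupd n) (F (x (n + 1))) (F xs) (hτ n) (hσ0 n)
          (hfo n xs hxsX) (by rw [← hvstar]; exact hτs n) hSys hHys (hysσ n)
          (hsad _ (hxX n))
    have hL : ∀ k, ∑ l ∈ Finset.range k, ys ⬝ᵥ tg (x (l + 1)) ≤ ys ⬝ᵥ (A *ᵥ (y k - y 0)) := by
      intro k
      induction k with
      | zero => simp
      | succ n ih =>
        rw [Finset.sum_range_succ]
        have h9 : ys ⬝ᵥ tg (x (n + 1)) = ys ⬝ᵥ (A *ᵥ y (n + 1)) - ys ⬝ᵥ (A *ᵥ y n) - ys ⬝ᵥ σ n := by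
          rw [hτ]
          simp only [dotProduct_add, dotProduct_sub, dotProduct_smul, smul_eq_mul,
            dot_symm hSs ys, dot_symm (psd_symm hHpsd) ys, hSys, hHys, dotProduct_zero]
          ring
        have := hysσ n
        simp only [mulVec_sub, dotProduct_sub] at ih ⊢
        linarith
    have h1 := avg_convex _ hLc x xbar hxbar k hk
    have h2 := hL k
    have h3 := psd_cs hApsd ys (y k - y 0)
    have e : y k - y 0 = (y k - ys) - (y 0 - ys) := by abel
    have h4 := psd_tri hApsd (y k - ys) (y 0 - ys)
    rw [← e] at h4
    have h5 : Real.sqrt (quadForm A (y k - ys))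
        ≤ Real.sqrt (quadForm A (y 0 - ys) + ((z 0 - zstar) ⬝ᵥ (z 0 - zstar)) / ρ) := by
      apply Real.sqrt_le_sqrt
      refine le_trans ?_ (hfej k)
      have : 0 ≤ ((z k - zstar) ⬝ᵥ (z k - zstar)) / ρ :=
        div_nonneg (Finset.sum_nonneg (fun i _ => mul_self_nonneg _)) hρ.le
      linarith
    have h6 : Real.sqrt (quadForm A ys)
        ≤ Real.sqrt ((∑ j, (mus j) ^ 2) + ∑ j, (lams j) ^ 2) * Real.sqrt ((N : ℝ) * lam1) := by
      rw [← Real.sqrt_mul (by positivity), hA]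
      exact Real.sqrt_le_sqrt (quad_const PA hPA lam1 hlam1max mus lams ys hys)
    have h7 := hsad (xbar k) (avg_mem X hXcv x xbar hxX hxbar k hk)
    have h8 : Real.sqrt (quadForm A ys) * Real.sqrt (quadForm A (y k - y 0))
        ≤ (Real.sqrt ((∑ j, (mus j) ^ 2) + ∑ j, (lams j) ^ 2) * Real.sqrt ((N : ℝ) * lam1)) *
          (Real.sqrt (quadForm A (y 0 - ys))
              + Real.sqrt (quadForm A (y 0 - ys) + ((z 0 - zstar) ⬝ᵥ (z 0 - zstar)) / ρ)) := by
      apply mul_le_mul h6 _ (Real.sqrt_nonneg _) (by positivity)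
      linarith
    have h9 : ys ⬝ᵥ tg (xbar k) ≤
        ((Real.sqrt ((∑ j, (mus j) ^ 2) + ∑ j, (lams j) ^ 2) * Real.sqrt ((N : ℝ) * lam1)) *
          (Real.sqrt (quadForm A (y 0 - ys))
              + Real.sqrt (quadForm A (y 0 - ys) + ((z 0 - zstar) ⬝ᵥ (z 0 - zstar)) / ρ))) / k := by
      rw [le_div_iff₀ hk', mul_comm]
      exact h1.trans (h2.trans (h3.trans h8))
    linarith
  · -- upper bound
    obtain ⟨z', hzpa, hzpb⟩ := mp_point Hhalf Htld Htdag hSs hHhalfsq hHtdag.1 (z 0) zstar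
    rw [← hvstar] at hzpa hzpb
    have hup : ∀ k, ∑ l ∈ Finset.range k, (F (x (l + 1)) - F xs)
        ≤ (1 / 2) * (quadForm A (y 0) - quadForm A (y k))
          + (1 / (2 * ρ)) * ((z 0 - z') ⬝ᵥ (z 0 - z') - (z k - z') ⬝ᵥ (z k - z')) := by
      intro k
      induction k with
      | zero => simp
      | succ n ih =>
        rw [Finset.sum_range_succ]
        have := step_upper A H Hhalf hApsd hSs hHpsd hHSpsd ρ hρ (y n) (y (n + 1)) (z n) (z (n + 1))
          z' _ (σ n) (tg xs) (hzupd n) (F (x (n + 1))) (F xs) (hτ n) (hσ0 n)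
          (hfo n xs hxsX) (by rw [hzpa]; exact hτs n)
        linarith
    have h1 := avg_convex _ hFc x xbar hxbar k hk
    have h2 := hup k
    rw [Finset.sum_sub_distrib, Finset.sum_const, Finset.card_range, nsmul_eq_mul, hzpb] at h2
    have h3 := psd_quad hApsd (y k)
    have h4 : 0 ≤ (1 / (2 * ρ)) * ((z k - z') ⬝ᵥ (z k - z')) :=
      mul_nonneg (by positivity) (Finset.sum_nonneg (fun i _ => mul_self_nonneg _))
    rw [le_div_iff₀ hk']
    linarith
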